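/- arXiv:1201.0697 — 2 statements merged into one kernel-verified Lean document; each statement's English description precedes it below -/
import Mathlib

section
/- For every real number c with 0 ≤ c < √6 − √3 there exists a natural number R_c such that for every integer r ≥ R_c and every subset W ⊆ V(G_r) with |W| ≤ 3r² (i.e. |W| ≤ |V(G_r)|/2), one has |𝒩_{G_r}(W)| ≥ c · √|W|. -/
/-- Adjacency of the infinite hexagonal grid `G∞` in brick-wall coordinates on `ℤ × ℤ`:
`(x,y)` and `(x',y')` are adjacent iff `y' = y` and `|x' - x| = 1`, or
`x' = x` and `|y' - y| = 1` and `x + min y y'` is even. -/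
def hexAdj (v w : ℤ × ℤ) : Prop :=
  (v.2 = w.2 ∧ (v.1 - w.1).natAbs = 1) ∨
  (v.1 = w.1 ∧ (v.2 - w.2).natAbs = 1 ∧ Even (v.1 + min v.2 w.2))

/-- The neighborhood `𝒩(W)`: vertices not in `W` adjacent to some vertex of `W`. -/
def hexNbhd (W : Set (ℤ × ℤ)) : Set (ℤ × ℤ) :=
  {v | v ∉ W ∧ ∃ w ∈ W, hexAdj v w}

/-- The boundary `ℬ(W)`: vertices of `W` adjacent to some vertex not in `W`. -/
def hexBdry (W : Set (ℤ × ℤ)) : Set (ℤ × ℤ) :=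
  {v | v ∈ W ∧ ∃ w, w ∉ W ∧ hexAdj v w}

/-- The outgoing edges `ℰ(W)`, encoded as ordered pairs `(v, w)` with `v ∈ W`, `w ∉ W`
and `v` adjacent to `w`; each edge with exactly one endpoint in `W` corresponds to
exactly one such pair. -/
def hexCutEdges (W : Set (ℤ × ℤ)) : Set ((ℤ × ℤ) × (ℤ × ℤ)) :=
  {p | p.1 ∈ W ∧ p.2 ∉ W ∧ hexAdj p.1 p.2}

/-- The hexagonal cell `C(a,b)`, with vertex set `{(2a+b+i, b+j) : i ∈ {0,1,2}, j ∈ {0,1}}`. -/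
def hexCell (a b : ℤ) : Set (ℤ × ℤ) :=
  {(2*a+b, b), (2*a+b+1, b), (2*a+b+2, b),
   (2*a+b, b+1), (2*a+b+1, b+1), (2*a+b+2, b+1)}

/-- The vertex set `V(G_r)` of the finite hexagonal grid of radius `r`: the union of the
cells `C(a,b)` with `(|a| + |b| + |a+b|)/2 ≤ r - 1`. -/
def gridVerts (r : ℕ) : Set (ℤ × ℤ) :=
  {v | ∃ a b : ℤ, a.natAbs + b.natAbs + (a+b).natAbs ≤ 2*(r-1) ∧ v ∈ hexCell a b}

/-- `𝒩_{G_r}(W)`: vertices of `V(G_r) \ W` adjacent to some vertex of `W`. -/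
def hexNbhdIn (r : ℕ) (W : Set (ℤ × ℤ)) : Set (ℤ × ℤ) :=
  {v | v ∈ gridVerts r ∧ v ∉ W ∧ ∃ w ∈ W, hexAdj v w}

/-- `ℬ_{G_r}(W)`: vertices of `W` adjacent to some vertex of `V(G_r) \ W`. -/
def hexBdryIn (r : ℕ) (W : Set (ℤ × ℤ)) : Set (ℤ × ℤ) :=
  {v | v ∈ W ∧ ∃ w, w ∈ gridVerts r ∧ w ∉ W ∧ hexAdj v w}

/-- `ℰ_{G_r}(W)`: the edges of `G_r` with exactly one endpoint in `W ⊆ V(G_r)`, encoded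
as ordered pairs `(v, w)` with `v ∈ W`, `w ∈ V(G_r) \ W`, `v` adjacent to `w`. -/
def hexCutEdgesIn (r : ℕ) (W : Set (ℤ × ℤ)) : Set ((ℤ × ℤ) × (ℤ × ℤ)) :=
  {p | p.1 ∈ W ∧ p.2 ∈ gridVerts r ∧ p.2 ∉ W ∧ hexAdj p.1 p.2}

/-- The index `ind_i(x,y)` of the direction-`i` row containing `(x,y)`
(directions numbered `0, 1, 2` for the paper's `1, 2, 3`):
`ind_1 = y`, `ind_2 = ⌊(y-x)/2⌋`, `ind_3 = ⌊(x+y)/2⌋`. -/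
def rowInd : Fin 3 → ℤ × ℤ → ℤ
  | 0, v => v.2
  | 1, v => Int.fdiv (v.2 - v.1) 2
  | 2, v => Int.fdiv (v.1 + v.2) 2

/-- The linear parameter `p_i` along direction-`i` rows:
`p_1 = x`, `p_2 = x + y`, `p_3 = x - y`. -/
def rowParam : Fin 3 → ℤ × ℤ → ℤ
  | 0, v => v.1
  | 1, v => v.1 + v.2
  | 2, v => v.1 - v.2

/-- A set of integers is consecutive if it contains every integer between any two of
its elements. -/
def ConsecutiveSet (S : Set ℤ) : Prop :=
  ∀ a ∈ S, ∀ b ∈ S, ∀ k : ℤ, a ≤ k → k ≤ b → k ∈ S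

/-- `v` is an outermost neighbor of `W` for direction `i`: the direction-`i` row of `v`
is gray, and the parameter of `v` is `m - 1` or `M + 1`, where `m` and `M` are the
minimum and maximum of the parameter over `W` intersected with that row. -/
def IsOutermostNeighbor (W : Set (ℤ × ℤ)) (i : Fin 3) (v : ℤ × ℤ) : Prop :=
  (rowParam i v + 1 ∈ rowParam i '' {w ∈ W | rowInd i w = rowInd i v} ∧
    ∀ q ∈ rowParam i '' {w ∈ W | rowInd i w = rowInd i v}, rowParam i v + 1 ≤ q) ∨
  (rowParam i v - 1 ∈ rowParam i '' {w ∈ W | rowInd i w = rowInd i v} ∧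
    ∀ q ∈ rowParam i '' {w ∈ W | rowInd i w = rowInd i v}, q ≤ rowParam i v - 1)

/-!
In cube coordinates, the vertices of the grid are the integer triples with entries in `[1 - r, r]`
and sum `1` or `2`, and each of the three directions partitions them into `2r` rows. A row is a
path, so unless it lies entirely in `W` or entirely outside `W` it meets the neighbourhood of `W`.
With `n` neighbours there are thus at least `2r - n` full rows per direction. A row inside `W` and
a row in another direction outside `W` are disjoint, which for `2n < 3r` leaves little freedom:

* If `W` contains no full row, its projection to each direction has at most `n` values. The vertices
  of either coordinate sum are pairs of values whose sum is again one of `n` values, and counting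
  such pairs gives `2|W| ≤ 3n² + 1`. The same applies to the complement of `W`, which is too large
  for this.
* Otherwise all full rows of `W`, or all those of its complement, have a common direction and lie
  within `n - r` of the boundary of the grid. That direction has at most `2n - r` projection values
  and the other two at most `n`, whence `2|W| + r² ≤ 4n² + 1`.

In all cases `4|W| ≤ 7n²` when `|W| ≤ 3r²`, and `√6 - √3 < 2 / √7`.
-/

section HexagonalGrid

open Finset

/-- `i`, `j`, `k` are the three coordinate directions, in some order. -/
structure IsFrame (i j k : Fin 3) : Prop where
  ne₁₂ : i ≠ j
  ne₁₃ : i ≠ k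
  ne₂₃ : j ≠ k

/-- The vertices of the hexagonal grid of radius `r` in cube coordinates: integer triples with
entries in `[1 - r, r]` and sum `1` or `2`. Fixing one coordinate selects a row of the grid. -/
noncomputable def cubeVerts (r : ℕ) : Finset (Fin 3 → ℤ) :=
  {u ∈ Fintype.piFinset fun _ => Icc (1 - r : ℤ) r | ∑ i, u i = 1 ∨ ∑ i, u i = 2}

/-- Adjacency in cube coordinates: the triples differ by one in a single coordinate. -/
def CubeAdj (u v : Fin 3 → ℤ) : Prop :=
  ∃ i, v = u + Pi.single i 1 ∨ u = v + Pi.single i 1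

/-- The triple with entries `a`, `b`, `c` in the directions `i`, `j`, `k` of a frame; the third
direction is determined by the other two. -/
def cubePoint (i j : Fin 3) (a b c : ℤ) : Fin 3 → ℤ :=
  fun l => if l = i then a else if l = j then b else c

/-- `N` separates the two sides `W` and `E` of a bipartition of the grid of radius `r`: every
edge between `W` and `E` has an endpoint in `N`. -/
structure Separation (r : ℕ) (W E N : Finset (Fin 3 → ℤ)) : Prop where
  union_eq : W ∪ E = cubeVerts r
  disjoint : Disjoint W E
  mem_or_mem : ∀ u ∈ W, ∀ v ∈ E, CubeAdj u v → u ∈ N ∨ v ∈ N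

/-- The indices of the rows in direction `i` that are contained in `W`. -/
noncomputable def fullRows (r : ℕ) (W : Finset (Fin 3 → ℤ)) (i : Fin 3) : Finset ℤ :=
  {t ∈ Icc (1 - r : ℤ) r | ∀ u ∈ cubeVerts r, u i = t → u ∈ W}

/-! ### Pairs with prescribed sums -/

section PairSums

variable {α : Type*} [AddCommMonoid α] [LinearOrder α] [IsOrderedCancelAddMonoid α]

/-- Addition is injective on such a hook: it increases with the second entry up to the corner
`(b, c)`, and from there with the first. -/
lemma card_hook_sum_mem_le {A B C : Finset α} {b c : α} (hb : ∀ x ∈ B, b ≤ x)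
    (hc : ∀ x ∈ C, x ≤ c) :
    #{p ∈ B ×ˢ C | (p.1 = b ∨ p.2 = c) ∧ p.1 + p.2 ∈ A} ≤ #A := by
  refine card_le_card_of_injOn (fun p => p.1 + p.2) (fun p hp => (mem_filter.1 hp).2.2) ?_
  rintro ⟨x, y⟩ hp ⟨x', y'⟩ hp' (hsum : x + y = x' + y')
  simp only [coe_filter, mem_product, Set.mem_ofPred_eq] at hp hp'
  obtain ⟨⟨hx, hy⟩, h, -⟩ := hp
  obtain ⟨⟨hx', hy'⟩, h', -⟩ := hp'
  rw [Prod.mk.injEq]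
  rcases h with rfl | rfl <;> rcases h' with rfl | rfl
  · exact ⟨rfl, add_left_cancel hsum⟩
  · exact (add_eq_add_iff_eq_and_eq (hb x' hx') (hc y hy)).1 hsum
  · exact ((add_eq_add_iff_eq_and_eq (hb x hx) (hc y' hy')).1 hsum.symm).imp Eq.symm Eq.symm
  · exact ⟨add_right_cancel hsum, rfl⟩

lemma card_filter_sum_mem_le_erase {A B C : Finset α} {b c : α} (hb : ∀ x ∈ B, b ≤ x)
    (hc : ∀ x ∈ C, x ≤ c) :
    #{p ∈ B ×ˢ C | p.1 + p.2 ∈ A} ≤ #A + #{p ∈ B.erase b ×ˢ C.erase c | p.1 + p.2 ∈ A} := by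
  have hsub : {p ∈ B ×ˢ C | p.1 + p.2 ∈ A} ⊆
      {p ∈ B ×ˢ C | (p.1 = b ∨ p.2 = c) ∧ p.1 + p.2 ∈ A} ∪
        {p ∈ B.erase b ×ˢ C.erase c | p.1 + p.2 ∈ A} := by
    intro p hp
    simp only [mem_union, mem_filter, mem_product, mem_erase] at hp ⊢
    tauto
  calc _ ≤ _ := (card_le_card hsub).trans (card_union_le _ _)
    _ ≤ _ := by gcongr; exact card_hook_sum_mem_le hb hc

lemma four_mul_card_filter_sum_mem_add_sq_le {A B C : Finset α} {n s : ℕ} (hB : #B ≤ n)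
    (hC : #C ≤ n) (hA : #A + s ≤ 2 * n) :
    4 * #{p ∈ B ×ˢ C | p.1 + p.2 ∈ A} + s ^ 2 ≤ 4 * n ^ 2 + 1 := by
  have hprod : #{p ∈ B ×ˢ C | p.1 + p.2 ∈ A} ≤ n ^ 2 := by
    rw [sq]
    exact (card_filter_le _ _).trans ((card_product B C).trans_le (Nat.mul_le_mul hB hC))
  induction s using Nat.twoStepInduction generalizing n B C with
  | zero => omega
  | one => omega
  | more s ih _ =>
    obtain ⟨m, rfl⟩ : ∃ m, n = m + 1 := ⟨n - 1, by omega⟩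
    rcases B.eq_empty_or_nonempty with rfl | hBne
    · simp only [empty_product, filter_empty, card_empty]
      nlinarith
    rcases C.eq_empty_or_nonempty with rfl | hCne
    · simp only [product_empty, filter_empty, card_empty]
      nlinarith
    have hB' : #(B.erase (B.min' hBne)) ≤ m := by rw [card_erase_of_mem (B.min'_mem _)]; omega
    have hC' : #(C.erase (C.max' hCne)) ≤ m := by rw [card_erase_of_mem (C.max'_mem _)]; omega
    have hle := card_filter_sum_mem_le_erase (A := A) (b := B.min' hBne) (c := C.max' hCne)
      (fun x hx => B.min'_le x hx) (fun x hx => C.le_max' x hx)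
    have hrec := ih hB' hC' (by omega) <| by
      rw [sq]
      exact (card_filter_le _ _).trans ((card_product _ _).trans_le (Nat.mul_le_mul hB' hC'))
    nlinarith

end PairSums

lemma two_mul_card_le_of_forall_exists {α β : Type*} {T : Finset β} {N : Finset α}
    {f : α → β} {P : α → Prop} (hP : ∀ t ∈ T, ∃ p ∈ N, f p = t ∧ P p)
    (hP' : ∀ t ∈ T, ∃ p ∈ N, f p = t ∧ ¬P p) :
    2 * #T ≤ #N := by
  classical
  have hsub : T ⊆ {p ∈ N | P p}.image f := fun t ht => by
    obtain ⟨p, hp, hpt, hPp⟩ := hP t ht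
    exact mem_image.2 ⟨p, mem_filter.2 ⟨hp, hPp⟩, hpt⟩
  have hsub' : T ⊆ {p ∈ N | ¬P p}.image f := fun t ht => by
    obtain ⟨p, hp, hpt, hPp⟩ := hP' t ht
    exact mem_image.2 ⟨p, mem_filter.2 ⟨hp, hPp⟩, hpt⟩
  have hcard := (card_le_card hsub).trans card_image_le
  have hcard' := (card_le_card hsub').trans card_image_le
  have hsplit := card_filter_add_card_filter_not (s := N) (fun p => P p)
  omega

lemma card_le_of_forall_mem_Icc {S : Finset ℤ} {a b : ℤ} (h : ∀ t ∈ S, a ≤ t ∧ t ≤ b) :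
    #S ≤ (b + 1 - a).toNat := by
  rw [← Int.card_Icc]
  exact card_le_card fun t ht => mem_Icc.2 (h t ht)

/-! ### Cube coordinates -/

variable {r : ℕ} {i j k : Fin 3}

namespace IsFrame

lemma swap (hf : IsFrame i j k) : IsFrame j i k := ⟨hf.ne₁₂.symm, hf.ne₂₃, hf.ne₁₃⟩

lemma rotate (hf : IsFrame i j k) : IsFrame j k i := ⟨hf.ne₂₃, hf.ne₁₂.symm, hf.ne₁₃.symm⟩

lemma eq_or_eq_or_eq (hf : IsFrame i j k) (l : Fin 3) : l = i ∨ l = j ∨ l = k := by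
  have := hf.ne₁₂
  have := hf.ne₁₃
  have := hf.ne₂₃
  omega

lemma forall_iff (hf : IsFrame i j k) {P : Fin 3 → Prop} : (∀ l, P l) ↔ P i ∧ P j ∧ P k := by
  refine ⟨fun h => ⟨h i, h j, h k⟩, fun ⟨hi, hj, hk⟩ l => ?_⟩
  rcases hf.eq_or_eq_or_eq l with rfl | rfl | rfl <;> assumption

lemma sum_eq (hf : IsFrame i j k) (u : Fin 3 → ℤ) : ∑ l, u l = u i + u j + u k := by
  have huniv : (univ : Finset (Fin 3)) = {i, j, k} := by
    ext l
    simpa using hf.eq_or_eq_or_eq l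
  rw [huniv, sum_insert (by simp [hf.ne₁₂, hf.ne₁₃]), sum_pair hf.ne₂₃, add_assoc]

lemma ext (hf : IsFrame i j k) {u v : Fin 3 → ℤ} (hi : u i = v i) (hj : u j = v j)
    (hk : u k = v k) : u = v :=
  funext (hf.forall_iff.2 ⟨hi, hj, hk⟩)

lemma cubePoint_apply (hf : IsFrame i j k) (a b c : ℤ) :
    cubePoint i j a b c i = a ∧ cubePoint i j a b c j = b ∧ cubePoint i j a b c k = c := by
  simp [cubePoint, hf.ne₁₂.symm, hf.ne₁₃.symm, hf.ne₂₃.symm]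

end IsFrame

lemma isFrame_add (l : Fin 3) : IsFrame l (l + 1) (l + 2) := by
  constructor <;> omega

lemma isFrame_zero_one_two : IsFrame 0 1 2 := isFrame_add 0

lemma exists_isFrame_of_ne (hij : i ≠ j) : ∃ k, IsFrame i j k := by
  obtain ⟨k, hik, hjk⟩ : ∃ k, i ≠ k ∧ j ≠ k := by decide +revert
  exact ⟨k, hij, hik, hjk⟩

lemma mem_cubeVerts (hf : IsFrame i j k) {u : Fin 3 → ℤ} : u ∈ cubeVerts r ↔
    (1 - r ≤ u i ∧ u i ≤ r) ∧ (1 - r ≤ u j ∧ u j ≤ r) ∧ (1 - r ≤ u k ∧ u k ≤ r) ∧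
      (u i + u j + u k = 1 ∨ u i + u j + u k = 2) := by
  simp only [cubeVerts, mem_filter, Fintype.mem_piFinset, mem_Icc, hf.forall_iff, hf.sum_eq,
    and_assoc]

lemma bounds_of_mem_cubeVerts {u : Fin 3 → ℤ} (hu : u ∈ cubeVerts r) (l : Fin 3) :
    1 - r ≤ u l ∧ u l ≤ r :=
  ((mem_cubeVerts (isFrame_add l)).1 hu).1

lemma exists_mem_cubeVerts (hf : IsFrame i j k) {a b c : ℤ} (ha : 1 - r ≤ a ∧ a ≤ r)
    (hb : 1 - r ≤ b ∧ b ≤ r) (hc : 1 - r ≤ c ∧ c ≤ r) (h : a + b + c = 1 ∨ a + b + c = 2) :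
    ∃ u ∈ cubeVerts r, u i = a ∧ u j = b ∧ u k = c := by
  refine ⟨cubePoint i j a b c, ?_, hf.cubePoint_apply a b c⟩
  obtain ⟨hi, hj, hk⟩ := hf.cubePoint_apply a b c
  rw [mem_cubeVerts hf, hi, hj, hk]
  exact ⟨ha, hb, hc, h⟩

lemma exists_mem_two_rows (hf : IsFrame i j k) {a b : ℤ} (ha : 1 - r ≤ a ∧ a ≤ r)
    (hb : 1 - r ≤ b ∧ b ≤ r) (hlo : 1 - r ≤ a + b) (hhi : a + b ≤ r + 1) :
    ∃ u ∈ cubeVerts r, u i = a ∧ u j = b := by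
  obtain ⟨c, hc, hsum⟩ : ∃ c : ℤ, (1 - r ≤ c ∧ c ≤ r) ∧ (a + b + c = 1 ∨ a + b + c = 2) := by
    by_cases hs : a + b ≤ r
    · exact ⟨1 - a - b, by omega⟩
    · exact ⟨2 - a - b, by omega⟩
  obtain ⟨u, hu, hui, huj, -⟩ := exists_mem_cubeVerts hf ha hb hc hsum
  exact ⟨u, hu, hui, huj⟩

lemma CubeAdj.symm {u v : Fin 3 → ℤ} (h : CubeAdj u v) : CubeAdj v u :=
  h.imp fun _ => Or.symm

/-- The row `u k = t` is a path along which `u i - u j` increases by one in each step. -/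
lemma exists_cubeAdj_succ (hf : IsFrame i j k) {u v : Fin 3 → ℤ} (hu : u ∈ cubeVerts r)
    (hv : v ∈ cubeVerts r) (huv : u k = v k) (hlt : u i - u j < v i - v j) :
    ∃ w ∈ cubeVerts r, CubeAdj u w ∧ w k = u k ∧ w i - w j = u i - u j + 1 := by
  have hu' := (mem_cubeVerts hf).1 hu
  have hv' := (mem_cubeVerts hf).1 hv
  rcases hu'.2.2.2 with hs | hs
  · refine ⟨u + Pi.single i 1, ?_, ⟨i, Or.inl rfl⟩, ?_⟩
    · rw [mem_cubeVerts hf]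
      simp only [Pi.add_apply, Pi.single_eq_same, Pi.single_eq_of_ne hf.ne₁₂.symm,
        Pi.single_eq_of_ne hf.ne₁₃.symm]
      omega
    · simp only [Pi.add_apply, Pi.single_eq_same, Pi.single_eq_of_ne hf.ne₁₂.symm,
        Pi.single_eq_of_ne hf.ne₁₃.symm]
      omega
  · refine ⟨u - Pi.single j 1, ?_, ⟨j, Or.inr (sub_add_cancel _ _).symm⟩, ?_⟩
    · rw [mem_cubeVerts hf]
      simp only [Pi.sub_apply, Pi.single_eq_same, Pi.single_eq_of_ne hf.ne₁₂,
        Pi.single_eq_of_ne hf.ne₂₃.symm]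
      omega
    · simp only [Pi.sub_apply, Pi.single_eq_same, Pi.single_eq_of_ne hf.ne₁₂,
        Pi.single_eq_of_ne hf.ne₂₃.symm]
      omega

lemma one_sub_mem_cubeVerts {u : Fin 3 → ℤ} : 1 - u ∈ cubeVerts r ↔ u ∈ cubeVerts r := by
  rw [mem_cubeVerts isFrame_zero_one_two, mem_cubeVerts isFrame_zero_one_two]
  simp only [Pi.sub_apply, Pi.one_apply]
  omega

/-- For either coordinate sum, the triples with `u l ≥ 1` and `u (l + 1) ≤ 0` form a rhombus of
`r ^ 2` vertices, and the rhombi for different `l` are disjoint. -/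
lemma six_mul_sq_le_card_cubeVerts (r : ℕ) : 6 * r ^ 2 ≤ #(cubeVerts r) := by
  let params : Finset (Fin 3 × ℤ × ℤ × ℤ) := univ ×ˢ Icc 1 2 ×ˢ Icc 1 (r : ℤ) ×ˢ Icc (1 - r : ℤ) 0
  have hparams : #params = 6 * r ^ 2 := by
    simp only [params, card_product, card_univ, Fintype.card_fin, Int.card_Icc]
    rw [show ((r : ℤ) + 1 - 1).toNat = r by omega, show ((2 : ℤ) + 1 - 1).toNat = 2 by rfl,
      show ((0 : ℤ) + 1 - (1 - r)).toNat = r by omega]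
    ring
  rw [← hparams]
  refine card_le_card_of_injOn
    (fun (l, σ, a, b) => cubePoint l (l + 1) a b (σ - a - b)) ?_ ?_
  · rintro ⟨l, σ, a, b⟩ hp
    simp only [params, coe_product, Set.mem_prod, mem_coe, mem_Icc] at hp
    obtain ⟨h₀, h₁, h₂⟩ := (isFrame_add l).cubePoint_apply a b (σ - a - b)
    rw [mem_coe, mem_cubeVerts (isFrame_add l)]
    simp only [h₀, h₁, h₂]
    omega
  · rintro ⟨l, σ, a, b⟩ hp ⟨l', σ', a', b'⟩ hp' heq
    simp only [params, coe_product, Set.mem_prod, mem_coe, mem_Icc] at hp hp' heq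
    obtain ⟨h₀, h₁, h₂⟩ := (isFrame_add l).cubePoint_apply a b (σ - a - b)
    obtain ⟨h₀', h₁', h₂'⟩ := (isFrame_add l').cubePoint_apply a' b' (σ' - a' - b')
    rw [heq] at h₀ h₁ h₂
    rcases (isFrame_add l).eq_or_eq_or_eq l' with rfl | rfl | rfl
    · simp only [Prod.mk.injEq, true_and]
      omega
    · omega
    · have hl : l + 2 + 1 = l := by omega
      simp only [hl] at h₀ h₁ h₂ h₀' h₁' h₂'
      omega

/-! ### Separated bipartitions of the grid -/

variable {W E N : Finset (Fin 3 → ℤ)}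

lemma mem_fullRows {t : ℤ} : t ∈ fullRows r W i ↔
    (1 - r ≤ t ∧ t ≤ r) ∧ ∀ u ∈ cubeVerts r, u i = t → u ∈ W := by
  simp only [fullRows, mem_filter, mem_Icc]

namespace Separation

lemma symm (h : Separation r W E N) : Separation r E W N where
  union_eq := by rw [union_comm, h.union_eq]
  disjoint := h.disjoint.symm
  mem_or_mem u hu v hv huv := (h.mem_or_mem v hv u hu huv.symm).symm

lemma subset_left (h : Separation r W E N) : W ⊆ cubeVerts r :=
  h.union_eq ▸ subset_union_left

lemma mem_or_mem_sides (h : Separation r W E N) {u : Fin 3 → ℤ} (hu : u ∈ cubeVerts r) :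
    u ∈ W ∨ u ∈ E := by
  rwa [← h.union_eq, mem_union] at hu

lemma exists_mem_between (h : Separation r W E N) (hf : IsFrame i j k) {u v : Fin 3 → ℤ}
    (hu : u ∈ W) (hv : v ∈ E) (huv : u k = v k) (hle : u i - u j ≤ v i - v j) :
    ∃ p ∈ N, p k = u k ∧ u i - u j ≤ p i - p j ∧ p i - p j ≤ v i - v j := by
  obtain ⟨d, hd⟩ := Int.le.dest hle
  have hvr := h.symm.subset_left hv
  induction d generalizing u with
  | zero =>
    have hu' := (mem_cubeVerts hf).1 (h.subset_left hu)
    have hv' := (mem_cubeVerts hf).1 hvr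
    have heq : u = v := hf.ext (by omega) (by omega) huv
    exact absurd hv (disjoint_left.1 h.disjoint (heq ▸ hu))
  | succ d ih =>
    obtain ⟨w, hw, huw, hwk, hwd⟩ :=
      exists_cubeAdj_succ hf (h.subset_left hu) hvr huv (by omega)
    rcases h.mem_or_mem_sides hw with hwW | hwE
    · obtain ⟨p, hp, hpk, hlo, hhi⟩ := ih hwW (hwk.trans huv) (by omega) (by omega)
      exact ⟨p, hp, hpk.trans hwk, by omega, hhi⟩
    · rcases h.mem_or_mem u hu w hwE huw with hp | hp
      · exact ⟨u, hp, rfl, le_rfl, hle⟩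
      · exact ⟨w, hp, hwk, by omega, by omega⟩

lemma mem_fullRows_or_mem_image (h : Separation r W E N) {t : ℤ} (ht : 1 - r ≤ t ∧ t ≤ r)
    (k : Fin 3) : t ∈ fullRows r W k ∨ t ∈ fullRows r E k ∨ t ∈ N.image (· k) := by
  by_contra! hcon
  obtain ⟨hW, hE, hN⟩ := hcon
  simp only [mem_fullRows, ht, and_self, true_and, not_forall] at hW hE
  obtain ⟨v, hv, hvk, hvW⟩ := hW
  obtain ⟨u, hu, huk, huE⟩ := hE
  have huW := (h.mem_or_mem_sides hu).resolve_right huE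
  have hvE := (h.mem_or_mem_sides hv).resolve_left hvW
  have hf := (isFrame_add k).rotate
  refine hN (mem_image.2 ?_)
  rcases le_total (u (k + 1) - u (k + 2)) (v (k + 1) - v (k + 2)) with hle | hle
  · obtain ⟨p, hp, hpk, -⟩ := h.exists_mem_between hf huW hvE (huk.trans hvk.symm) hle
    exact ⟨p, hp, hpk.trans huk⟩
  · obtain ⟨p, hp, hpk, -⟩ := h.symm.exists_mem_between hf hvE huW (hvk.trans huk.symm) hle
    exact ⟨p, hp, hpk.trans hvk⟩

lemma mem_fullRows_union_image (h : Separation r W E N) {u : Fin 3 → ℤ} (hu : u ∈ W)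
    (l : Fin 3) : u l ∈ fullRows r W l ∪ N.image (· l) := by
  have hur := h.subset_left hu
  rw [mem_union]
  rcases h.mem_fullRows_or_mem_image (bounds_of_mem_cubeVerts hur l) l with hW | hE | hN
  · exact Or.inl hW
  · exact absurd ((mem_fullRows.1 hE).2 u hur rfl) (disjoint_left.1 h.disjoint hu)
  · exact Or.inr hN

lemma two_mul_le_card_fullRows_add (h : Separation r W E N) (k : Fin 3) :
    2 * r ≤ #(fullRows r W k ∪ fullRows r E k) + #N := by
  have hsub : Icc (1 - r : ℤ) r ⊆ (fullRows r W k ∪ fullRows r E k) ∪ N.image (· k) := by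
    intro t ht
    simpa only [mem_union, or_assoc] using h.mem_fullRows_or_mem_image (mem_Icc.1 ht) k
  calc 2 * r = #(Icc (1 - r : ℤ) r) := by rw [Int.card_Icc]; omega
    _ ≤ _ := (card_le_card hsub).trans (card_union_le _ _)
    _ ≤ _ := by gcongr; exact card_image_le

lemma add_of_mem_fullRows (h : Separation r W E N) (hf : IsFrame i j k) {a b : ℤ}
    (ha : a ∈ fullRows r W i) (hb : b ∈ fullRows r E j) : r + 2 ≤ a + b ∨ a + b ≤ -r := by
  rw [mem_fullRows] at ha hb
  by_contra hcon
  obtain ⟨u, hu, hua, hub⟩ := exists_mem_two_rows hf ha.1 hb.1 (by omega) (by omega)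
  exact disjoint_left.1 h.disjoint (ha.2 u hu hua) (hb.2 u hu hub)

/-- Reflection exchanges the two cases of `add_of_mem_fullRows`. -/
lemma reflect (h : Separation r W E N) :
    Separation r (W.image (1 - ·)) (E.image (1 - ·)) (N.image (1 - ·)) where
  union_eq := by
    rw [← image_union, h.union_eq]
    ext u
    refine ⟨fun hu => ?_, fun hu =>
      mem_image.2 ⟨1 - u, one_sub_mem_cubeVerts.2 hu, sub_sub_cancel _ _⟩⟩
    obtain ⟨v, hv, rfl⟩ := mem_image.1 hu
    exact one_sub_mem_cubeVerts.2 hv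
  disjoint := (disjoint_image sub_right_injective).2 h.disjoint
  mem_or_mem := by
    simp only [forall_mem_image, sub_right_injective.mem_finset_image]
    rintro u hu v hv ⟨i, huv | huv⟩
    · exact h.mem_or_mem u hu v hv ⟨i, Or.inr (by linear_combination huv)⟩
    · exact h.mem_or_mem u hu v hv ⟨i, Or.inl (by linear_combination huv)⟩

lemma one_sub_mem_fullRows_image {t : ℤ} (ht : t ∈ fullRows r W i) :
    1 - t ∈ fullRows r (W.image (1 - ·)) i := by
  rw [mem_fullRows] at ht ⊢
  refine ⟨by omega, fun u hu hut => mem_image.2 ⟨1 - u, ?_, sub_sub_cancel _ _⟩⟩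
  refine ht.2 _ (one_sub_mem_cubeVerts.2 hu) ?_
  rw [Pi.sub_apply, hut, Pi.one_apply, sub_sub_cancel]

/-! ### Full rows on both sides -/

lemma le_max_of_mem_fullRows (h : Separation r W E N) (hf : IsFrame i j k) {a b : ℤ}
    (ha : a ∈ fullRows r W i) (hb : b ∈ fullRows r E j) (hab : r + 2 ≤ a + b) :
    2 * r + 1 - (#N : ℤ) ≤ max a b := by
  have ha' := (mem_fullRows.1 ha).1
  have hb' := (mem_fullRows.1 hb).1
  have hbounds : ∀ t ∈ fullRows r W k ∪ fullRows r E k, r + 2 - max a b ≤ t ∧ t ≤ r := by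
    intro t ht
    rcases mem_union.1 ht with ht | ht
    · have := h.add_of_mem_fullRows hf.rotate.swap ht hb
      have := (mem_fullRows.1 ht).1
      omega
    · have := h.add_of_mem_fullRows hf.swap.rotate ha ht
      have := (mem_fullRows.1 ht).1
      omega
  have hcard := card_le_of_forall_mem_Icc hbounds
  have hrows := h.two_mul_le_card_fullRows_add k
  omega

lemma exists_mem_before (h : Separation r W E N) (hf : IsFrame i j k) {b e t : ℤ}
    (hb : b ∈ fullRows r W j) (he : e ∈ fullRows r E i) (heb : r + 2 ≤ e + b)
    (ht : 1 - r ≤ t ∧ t ≤ 0) : ∃ p ∈ N, p k = t ∧ p i - p j ≤ 2 * e + t - 2 := by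
  rw [mem_fullRows] at hb he
  obtain ⟨u, hu, huj, huk⟩ :=
    exists_mem_two_rows hf.rotate hb.1 (b := t) (by omega) (by omega) (by omega)
  obtain ⟨v, hv, hvi, hvj, hvk⟩ :=
    exists_mem_cubeVerts hf he.1 (b := 2 - e - t) (c := t) (by omega) (by omega) (by omega)
  have hu' := (mem_cubeVerts hf).1 hu
  obtain ⟨p, hp, hpk, -, hle⟩ :=
    h.exists_mem_between hf (hb.2 u hu huj) (he.2 v hv hvi) (huk.trans hvk.symm) (by omega)
  exact ⟨p, hp, hpk.trans huk, by omega⟩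

lemma exists_mem_after (h : Separation r W E N) (hf : IsFrame i j k) {a e t : ℤ}
    (ha : a ∈ fullRows r W i) (he : e ∈ fullRows r E i) (hea : e < a) (he₀ : 0 ≤ e)
    (ht : 1 - r ≤ t ∧ t ≤ 0) : ∃ p ∈ N, p k = t ∧ 2 * e + t - 1 ≤ p i - p j := by
  rw [mem_fullRows] at ha he
  obtain ⟨u, hu, hui, huk⟩ :=
    exists_mem_two_rows hf.swap.rotate ha.1 (b := t) (by omega) (by omega) (by omega)
  obtain ⟨v, hv, hvi, hvj, hvk⟩ :=
    exists_mem_cubeVerts hf he.1 (b := 1 - e - t) (c := t) (by omega) (by omega) (by omega)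
  have hu' := (mem_cubeVerts hf).1 hu
  obtain ⟨p, hp, hpk, hle, -⟩ :=
    h.symm.exists_mem_between hf (he.2 v hv hvi) (ha.2 u hu hui) (hvk.trans huk.symm) (by omega)
  exact ⟨p, hp, hpk.trans hvk, by omega⟩

/-- Every row `u k = t` with `t ≤ 0` meets the `W`-row `b`, the `E`-row `e` and the `W`-row `a` in
this order, and hence contains two vertices of `N`. -/
lemma two_mul_le_card_of_alternating (h : Separation r W E N) (hf : IsFrame i j k) {a b e : ℤ}
    (ha : a ∈ fullRows r W i) (hb : b ∈ fullRows r W j) (he : e ∈ fullRows r E i)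
    (hea : e < a) (heb : r + 2 ≤ e + b) : 2 * r ≤ #N := by
  have he₀ : 0 ≤ e := by
    have := (mem_fullRows.1 hb).1
    omega
  calc 2 * r = 2 * #(Icc (1 - r : ℤ) 0) := by rw [Int.card_Icc]; omega
    _ ≤ #N := by
      refine two_mul_card_le_of_forall_exists (f := (· k))
        (P := fun p => p i - p j ≤ 2 * e + p k - 2) (fun t ht => ?_) fun t ht => ?_
      · obtain ⟨p, hp, rfl, hle⟩ := h.exists_mem_before hf hb he heb (mem_Icc.1 ht)
        exact ⟨p, hp, rfl, hle⟩
      · obtain ⟨p, hp, rfl, hle⟩ := h.exists_mem_after hf ha he hea he₀ (mem_Icc.1 ht)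
        exact ⟨p, hp, rfl, by omega⟩

lemma exists_mem_fullRows_right_lt (h : Separation r W E N) (hN : 2 * #N < 3 * r)
    (hF : ∀ t ∈ fullRows r W i, 2 * r + 1 - (#N : ℤ) ≤ t) :
    ∃ e ∈ fullRows r E i, e < 2 * r + 1 - (#N : ℤ) := by
  by_contra! hcon
  have hbounds : ∀ t ∈ fullRows r W i ∪ fullRows r E i, 2 * r + 1 - (#N : ℤ) ≤ t ∧ t ≤ r := by
    intro t ht
    rcases mem_union.1 ht with ht | ht
    · exact ⟨hF t ht, (mem_fullRows.1 ht).1.2⟩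
    · exact ⟨hcon t ht, (mem_fullRows.1 ht).1.2⟩
  have hcard := card_le_of_forall_mem_Icc hbounds
  have hrows := h.two_mul_le_card_fullRows_add i
  omega

lemma fullRows_eq_empty (h : Separation r W E N) (hN : 2 * #N < 3 * r) (hf : IsFrame i j k)
    {a x : ℤ} (ha : a ∈ fullRows r W i) (hx : x ∈ fullRows r E k)
    (hF : ∀ t ∈ fullRows r W i, 2 * r + 1 - (#N : ℤ) ≤ t) : fullRows r W j = ∅ := by
  refine eq_empty_of_forall_notMem fun b hb => ?_
  have hax := h.add_of_mem_fullRows hf.swap.rotate ha hx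
  have hbx := h.add_of_mem_fullRows hf.rotate hb hx
  obtain ⟨e, he, hlt⟩ := h.exists_mem_fullRows_right_lt hN hF
  have hbe := h.add_of_mem_fullRows hf.swap hb he
  have ha' := (mem_fullRows.1 ha).1
  have hb' := (mem_fullRows.1 hb).1
  have hx' := (mem_fullRows.1 hx).1
  have he' := (mem_fullRows.1 he).1
  have hK := hF a ha
  have := h.two_mul_le_card_of_alternating hf ha hb he (by omega) (by omega)
  omega

/-! ### Cardinality bounds -/

lemma card_fullRows_union_image_le (W N : Finset (Fin 3 → ℤ)) (l : Fin 3) :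
    #(fullRows r W l ∪ N.image (· l)) ≤ #(fullRows r W l) + #N :=
  (card_union_le _ _).trans (Nat.add_le_add_left card_image_le _)

lemma card_filter_sum_eq_le (hf : IsFrame i j k) {X : Finset (Fin 3 → ℤ)} {A B C : Finset ℤ}
    (hA : ∀ u ∈ X, u i ∈ A) (hB : ∀ u ∈ X, u j ∈ B) (hC : ∀ u ∈ X, u k ∈ C) (σ : ℤ) :
    #{u ∈ X | u i + u j + u k = σ} ≤ #{p ∈ B ×ˢ C | p.1 + p.2 ∈ A.image (σ - ·)} := by
  refine card_le_card_of_injOn (fun u => (u j, u k)) ?_ ?_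
  · intro u hu
    obtain ⟨huX, hsum⟩ := mem_filter.1 hu
    exact mem_filter.2 ⟨mem_product.2 ⟨hB u huX, hC u huX⟩,
      mem_image.2 ⟨u i, hA u huX, by dsimp only; omega⟩⟩
  · intro u hu v hv huv
    obtain ⟨-, hsum⟩ := mem_filter.1 hu
    obtain ⟨-, hsum'⟩ := mem_filter.1 hv
    obtain ⟨hj, hk⟩ := Prod.mk.inj huv
    exact hf.ext (by omega) hj hk

lemma two_mul_card_add_sq_le (h : Separation r W E N) (hf : IsFrame i j k)
    (hj : fullRows r W j = ∅) (hk : fullRows r W k = ∅) {s : ℕ}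
    (hs : #(fullRows r W i) + s ≤ #N) : 2 * #W + s ^ 2 ≤ 4 * #N ^ 2 + 1 := by
  have hlayer : ∀ σ : ℤ, 4 * #{u ∈ W | u i + u j + u k = σ} + s ^ 2 ≤ 4 * #N ^ 2 + 1 := by
    intro σ
    have hi := card_fullRows_union_image_le (r := r) W N i
    have hA := card_image_le (s := fullRows r W i ∪ N.image (· i)) (f := fun t => σ - t)
    have hB := card_fullRows_union_image_le (r := r) W N j
    have hC := card_fullRows_union_image_le (r := r) W N k
    have hle := card_filter_sum_eq_le hf (fun u hu => h.mem_fullRows_union_image hu i)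
      (fun u hu => h.mem_fullRows_union_image hu j)
      (fun u hu => h.mem_fullRows_union_image hu k) σ
    rw [hj, card_empty, zero_add] at hB
    rw [hk, card_empty, zero_add] at hC
    rw [hj, hk] at hle
    have hAs : #((fullRows r W i ∪ N.image (· i)).image (σ - ·)) + s ≤ 2 * #N := by omega
    have := four_mul_card_filter_sum_mem_add_sq_le hB hC hAs
    omega
  have hsplit : W ⊆ {u ∈ W | u i + u j + u k = 1} ∪ {u ∈ W | u i + u j + u k = 2} := by
    intro u hu
    rw [mem_union, mem_filter, mem_filter, ← and_or_left]
    exact ⟨hu, ((mem_cubeVerts hf).1 (h.subset_left hu)).2.2.2⟩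
  have hcard := (card_le_card hsplit).trans (card_union_le _ _)
  have h₁ := hlayer 1
  have h₂ := hlayer 2
  omega

lemma two_mul_card_le_of_fullRows_eq_empty (h : Separation r W E N)
    (hW : ∀ i, fullRows r W i = ∅) : 2 * #W ≤ 3 * #N ^ 2 + 1 := by
  have := h.two_mul_card_add_sq_le isFrame_zero_one_two (hW _) (hW _) (s := #N)
    (by rw [hW, card_empty, zero_add])
  omega

lemma card_le_pow_three_of_fullRows_eq_empty (h : Separation r W E N)
    (hW : ∀ i, fullRows r W i = ∅) : #W ≤ #N ^ 3 := by
  have hsub : W ⊆ Fintype.piFinset fun l => N.image (· l) := fun u hu =>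
    Fintype.mem_piFinset.2 fun l => by
      simpa only [hW l, empty_union] using h.mem_fullRows_union_image hu l
  calc #W ≤ ∏ l, #(N.image (· l)) := (card_le_card hsub).trans_eq (Fintype.card_piFinset _)
    _ ≤ ∏ _l : Fin 3, #N := prod_le_prod' fun _ _ => card_image_le
    _ = #N ^ 3 := by rw [prod_const, card_univ, Fintype.card_fin]

lemma six_mul_sq_le_card_add_card (h : Separation r W E N) : 6 * r ^ 2 ≤ #W + #E := by
  rw [← card_union_of_disjoint h.disjoint, h.union_eq]
  exact six_mul_sq_le_card_cubeVerts r

lemma two_mul_card_add_sq_le_of_forall_le (h : Separation r W E N) (hN : 2 * #N < 3 * r)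
    (hf : IsFrame i j k) {a b : ℤ} (ha : a ∈ fullRows r W i) (hb : b ∈ fullRows r E j)
    (hF : ∀ t ∈ fullRows r W i, 2 * r + 1 - (#N : ℤ) ≤ t) :
    2 * #W + r ^ 2 ≤ 4 * #N ^ 2 + 1 := by
  have hk : fullRows r W k = ∅ := h.fullRows_eq_empty hN hf.swap.rotate ha hb hF
  obtain ⟨c, hc⟩ : (fullRows r E k).Nonempty := by
    have hrows := h.two_mul_le_card_fullRows_add k
    rw [hk, empty_union] at hrows
    exact card_pos.1 (by omega)
  have hj : fullRows r W j = ∅ := h.fullRows_eq_empty hN hf ha hc hF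
  refine h.two_mul_card_add_sq_le hf hj hk ?_
  have hcard := card_le_of_forall_mem_Icc fun t ht => ⟨hF t ht, (mem_fullRows.1 ht).1.2⟩
  have ha' := (mem_fullRows.1 ha).1
  have hK := hF a ha
  omega

lemma two_mul_card_add_sq_le_of_add_le (h : Separation r W E N) (hN : 2 * #N < 3 * r)
    (hW : #W ≤ 3 * r ^ 2) (hf : IsFrame i j k) {a b : ℤ} (ha : a ∈ fullRows r W i)
    (hb : b ∈ fullRows r E j) (hab : r + 2 ≤ a + b) : 2 * #W + r ^ 2 ≤ 4 * #N ^ 2 + 1 := by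
  by_cases hF : ∀ t ∈ fullRows r W i, 2 * r + 1 - (#N : ℤ) ≤ t
  · exact h.two_mul_card_add_sq_le_of_forall_le hN hf ha hb hF
  push Not at hF
  obtain ⟨a', ha', hlt⟩ := hF
  have hE : ∀ t ∈ fullRows r E j, 2 * r + 1 - (#N : ℤ) ≤ t := by
    intro t ht
    have hbr := (mem_fullRows.1 hb).1
    have har := (mem_fullRows.1 ha).1
    have har' := (mem_fullRows.1 ha').1
    have htr := (mem_fullRows.1 ht).1
    have hab' := h.add_of_mem_fullRows hf ha' hb
    have hat' := h.add_of_mem_fullRows hf ha' ht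
    exact (le_max_iff.1 (h.le_max_of_mem_fullRows hf ha' ht (by omega))).resolve_left
      hlt.not_ge
  have hcard := h.symm.two_mul_card_add_sq_le_of_forall_le hN hf.swap hb ha hE
  have hgrid := h.six_mul_sq_le_card_add_card
  omega

lemma two_mul_card_add_sq_le_of_mem_fullRows (h : Separation r W E N) (hN : 2 * #N < 3 * r)
    (hW : #W ≤ 3 * r ^ 2) (hf : IsFrame i j k) {a b : ℤ} (ha : a ∈ fullRows r W i)
    (hb : b ∈ fullRows r E j) : 2 * #W + r ^ 2 ≤ 4 * #N ^ 2 + 1 := by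
  rcases h.add_of_mem_fullRows hf ha hb with hab | hab
  · exact h.two_mul_card_add_sq_le_of_add_le hN hW hf ha hb hab
  · have hcard : ∀ S : Finset (Fin 3 → ℤ), #(S.image (1 - ·)) = #S := fun S =>
      card_image_of_injective S sub_right_injective
    simpa only [hcard] using h.reflect.two_mul_card_add_sq_le_of_add_le (by rwa [hcard])
      (by rwa [hcard]) hf (one_sub_mem_fullRows_image ha) (one_sub_mem_fullRows_image hb)
      (by omega)

lemma exists_ne_fullRows_nonempty (h : Separation r W E N) (hN : #N < 2 * r)
    (hi : (fullRows r W i).Nonempty) (hj : (fullRows r E j).Nonempty) :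
    ∃ i j, i ≠ j ∧ (fullRows r W i).Nonempty ∧ (fullRows r E j).Nonempty := by
  by_cases hij : i = j
  · subst hij
    have hne := (isFrame_add i).ne₁₂
    have hunion : (fullRows r W (i + 1) ∪ fullRows r E (i + 1)).Nonempty := by
      have hrows := h.two_mul_le_card_fullRows_add (i + 1)
      exact card_pos.1 (by omega)
    rcases union_nonempty.1 hunion with hW | hE
    · exact ⟨i + 1, i, hne.symm, hW, hj⟩
    · exact ⟨i, i + 1, hne, hi, hE⟩
  · exact ⟨i, j, hij, hi, hj⟩

theorem four_mul_card_le (h : Separation r W E N) (hW : #W ≤ 3 * r ^ 2) :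
    4 * #W ≤ 7 * #N ^ 2 := by
  by_cases hN : 2 * #N < 3 * r
  swap
  · nlinarith
  by_cases hWrows : ∀ i, fullRows r W i = ∅
  · have hsq := h.two_mul_card_le_of_fullRows_eq_empty hWrows
    have hcube := h.card_le_pow_three_of_fullRows_eq_empty hWrows
    rcases Nat.lt_or_ge #N 2 with hn | hn
    · interval_cases #N <;> omega
    · nlinarith
  by_cases hErows : ∀ i, fullRows r E i = ∅
  · have hsq := h.symm.two_mul_card_le_of_fullRows_eq_empty hErows
    have hgrid := h.six_mul_sq_le_card_add_card
    omega
  push Not at hWrows hErows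
  obtain ⟨i₀, hi₀⟩ := hWrows
  obtain ⟨j₀, hj₀⟩ := hErows
  obtain ⟨i, j, hij, ⟨a, ha⟩, b, hb⟩ := h.exists_ne_fullRows_nonempty (by omega) hi₀ hj₀
  obtain ⟨k, hf⟩ := exists_isFrame_of_ne hij
  have hsq := h.two_mul_card_add_sq_le_of_mem_fullRows hN hW hf ha hb
  have hr : 2 ≤ r := by
    have := h.add_of_mem_fullRows hf ha hb
    have := (mem_fullRows.1 ha).1
    have := (mem_fullRows.1 hb).1
    omega
  have hr' : 2 ^ 2 ≤ r ^ 2 := Nat.pow_le_pow_left hr 2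
  nlinarith

end Separation

/-! ### From brick-wall to cube coordinates -/

/-- The brick-wall coordinates of the vertex with cube coordinates `u`. Its row indices `rowInd`
are `u 0`, `-u 1` and `1 - u 2`. -/
def brickPoint (u : Fin 3 → ℤ) : ℤ × ℤ := (u 1 + 1 - u 2, u 0)

open Classical in
/-- The vertices of the radius-`r` grid, in cube coordinates, whose brick-wall coordinates lie
in `S`. -/
noncomputable def cubePreimage (r : ℕ) (S : Set (ℤ × ℤ)) : Finset (Fin 3 → ℤ) :=
  {u ∈ cubeVerts r | brickPoint u ∈ S}

lemma mem_cubePreimage {S : Set (ℤ × ℤ)} {u : Fin 3 → ℤ} :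
    u ∈ cubePreimage r S ↔ u ∈ cubeVerts r ∧ brickPoint u ∈ S := by
  simp only [cubePreimage, mem_filter]

lemma brickPoint_injOn_cubeVerts : Set.InjOn brickPoint (cubeVerts r) := by
  intro u hu v hv huv
  rw [mem_coe, mem_cubeVerts isFrame_zero_one_two] at hu hv
  simp only [brickPoint, Prod.mk.injEq] at huv
  exact isFrame_zero_one_two.ext (by omega) (by omega) (by omega)

lemma brickPoint_mem_gridVerts {u : Fin 3 → ℤ} (hu : u ∈ cubeVerts r) :
    brickPoint u ∈ gridVerts r := by
  rw [mem_cubeVerts isFrame_zero_one_two] at hu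
  simp only [gridVerts, hexCell, brickPoint, Set.mem_ofPred_eq, Set.mem_insert_iff,
    Set.mem_singleton_iff, Prod.mk.injEq]
  rcases hu.2.2.2 with hs | hs
  · by_cases h₀ : u 1 ≤ u 0 ∧ u 2 ≤ u 0
    · exact ⟨u 1, u 0 - 1, by omega, by omega⟩
    by_cases h₁ : u 0 ≤ u 1 ∧ u 2 ≤ u 1
    · exact ⟨u 1 - 1, u 0, by omega, by omega⟩
    · exact ⟨u 1, u 0, by omega, by omega⟩
  · by_cases h₀ : u 0 ≤ u 1 ∧ u 0 ≤ u 2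
    · exact ⟨u 1 - 1, u 0, by omega, by omega⟩
    by_cases h₁ : u 1 ≤ u 0 ∧ u 1 ≤ u 2
    · exact ⟨u 1, u 0 - 1, by omega, by omega⟩
    · exact ⟨u 1 - 1, u 0 - 1, by omega, by omega⟩

lemma exists_brickPoint_eq (hr : 1 ≤ r) {v : ℤ × ℤ} (hv : v ∈ gridVerts r) :
    ∃ u ∈ cubeVerts r, brickPoint u = v := by
  obtain ⟨x, y⟩ := v
  simp only [gridVerts, hexCell, Set.mem_ofPred_eq, Set.mem_insert_iff,
    Set.mem_singleton_iff, Prod.mk.injEq] at hv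
  obtain ⟨a, b, hab, hv⟩ := hv
  obtain ⟨u, hu, h₀, h₁, h₂⟩ := exists_mem_cubeVerts (r := r) isFrame_zero_one_two (a := y)
    (b := (x - y + 1) / 2) (c := 1 - (x + y) / 2) (by omega) (by omega) (by omega) (by omega)
  refine ⟨u, hu, Prod.ext ?_ h₀⟩
  simp only [brickPoint]
  omega

lemma card_cubePreimage (hr : 1 ≤ r) {S : Set (ℤ × ℤ)} (hS : S ⊆ gridVerts r) :
    #(cubePreimage r S) = S.ncard := by
  have himage : brickPoint '' cubePreimage r S = S := by
    ext v
    constructor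
    · rintro ⟨u, hu, rfl⟩
      exact (mem_cubePreimage.1 hu).2
    · intro hv
      obtain ⟨u, hu, rfl⟩ := exists_brickPoint_eq hr (hS hv)
      exact ⟨u, mem_cubePreimage.2 ⟨hu, hv⟩, rfl⟩
  have hinj : Set.InjOn brickPoint (cubePreimage r S) :=
    brickPoint_injOn_cubeVerts.mono fun u hu => (mem_cubePreimage.1 hu).1
  rw [← Set.ncard_coe_finset, ← hinj.ncard_image, himage]

lemma hexAdj_brickPoint_add_single {u : Fin 3 → ℤ} (hu : u ∈ cubeVerts r)
    (hv : u + Pi.single i 1 ∈ cubeVerts r) :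
    hexAdj (brickPoint u) (brickPoint (u + Pi.single i 1)) := by
  rw [mem_cubeVerts isFrame_zero_one_two] at hu hv
  rcases isFrame_zero_one_two.eq_or_eq_or_eq i with rfl | rfl | rfl <;>
    simp only [hexAdj, brickPoint, Pi.add_apply, Pi.single_apply, Fin.reduceEq, reduceIte,
      Int.even_iff] at hv ⊢ <;>
    omega

lemma hexAdj_symm {v w : ℤ × ℤ} (h : hexAdj v w) : hexAdj w v := by
  rcases h with ⟨hy, hx⟩ | ⟨hx, hy, heven⟩
  · exact Or.inl ⟨hy.symm, by omega⟩
  · exact Or.inr ⟨hx.symm, by omega, by rwa [← hx, min_comm]⟩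

lemma CubeAdj.hexAdj_brickPoint {u v : Fin 3 → ℤ} (h : CubeAdj u v) (hu : u ∈ cubeVerts r)
    (hv : v ∈ cubeVerts r) : hexAdj (brickPoint u) (brickPoint v) := by
  obtain ⟨i, rfl | rfl⟩ := h
  · exact hexAdj_brickPoint_add_single hu hv
  · exact hexAdj_symm (hexAdj_brickPoint_add_single hv hu)

lemma separation_cubePreimage (r : ℕ) (W : Set (ℤ × ℤ)) :
    Separation r (cubePreimage r W) (cubePreimage r Wᶜ) (cubePreimage r (hexNbhdIn r W)) where
  union_eq := by
    ext u
    rw [mem_union, mem_cubePreimage, mem_cubePreimage, ← and_or_left]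
    exact and_iff_left (em _)
  disjoint := disjoint_left.2 fun u hu hu' =>
    (mem_cubePreimage.1 hu').2 (mem_cubePreimage.1 hu).2
  mem_or_mem u hu v hv huv := by
    rw [mem_cubePreimage] at hu hv
    exact Or.inr <| mem_cubePreimage.2 ⟨hv.1, brickPoint_mem_gridVerts hv.1, hv.2,
      brickPoint u, hu.2, huv.symm.hexAdj_brickPoint hv.1 hu.1⟩

theorem four_mul_ncard_le (hr : 1 ≤ r) {W : Set (ℤ × ℤ)} (hW : W ⊆ gridVerts r)
    (hcard : W.ncard ≤ 3 * r ^ 2) : 4 * W.ncard ≤ 7 * (hexNbhdIn r W).ncard ^ 2 := by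
  rw [← card_cubePreimage hr hW] at hcard ⊢
  rw [← card_cubePreimage hr fun v hv => hv.1]
  exact (separation_cubePreimage r W).four_mul_card_le hcard

lemma sqrt_six_sub_sqrt_three_le : √6 - √3 ≤ 2 / √7 := by
  have h6 : √6 ≤ 2.4496 := Real.sqrt_le_iff.2 ⟨by norm_num, by norm_num⟩
  have h3 : 1.732 ≤ √3 := Real.le_sqrt_of_sq_le (by norm_num)
  have h7 : √7 ≤ 2.65 := Real.sqrt_le_iff.2 ⟨by norm_num, by norm_num⟩
  rw [le_div_iff₀ (by positivity)]
  nlinarith [Real.sqrt_nonneg 7]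

theorem finite_hex_neighbor_isoperimetric_large_radius_general {c : ℝ} (hc : c ≤ 2 / √7)
    (hr : 1 ≤ r) {W : Set (ℤ × ℤ)} (hW : W ⊆ gridVerts r) (hcard : W.ncard ≤ 3 * r ^ 2) :
    c * √W.ncard ≤ (hexNbhdIn r W).ncard := by
  have hmain : (4 * W.ncard : ℝ) ≤ 7 * (hexNbhdIn r W).ncard ^ 2 := by
    exact_mod_cast four_mul_ncard_le hr hW hcard
  calc c * √W.ncard ≤ 2 / √7 * √W.ncard := by gcongr
    _ = √(4 * W.ncard / 7) := by
      rw [Real.sqrt_div (by positivity), Real.sqrt_mul (by positivity),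
        show √(4 : ℝ) = 2 by rw [Real.sqrt_eq_iff_mul_self_eq] <;> norm_num, div_mul_eq_mul_div]
    _ ≤ (hexNbhdIn r W).ncard := Real.sqrt_le_iff.2 ⟨by positivity, by linarith⟩

end HexagonalGrid

/-- For every `0 ≤ c < √6 - √3` there is a radius `R_c` beyond which
`|𝒩_{G_r}(W)| ≥ c · √|W|` holds for all `W ⊆ V(G_r)` with `|W| ≤ 3r²`. -/
theorem finite_hex_neighbor_isoperimetric_large_radius (c : ℝ) (hc0 : 0 ≤ c)
    (hc : c < Real.sqrt 6 - Real.sqrt 3) :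
    ∃ R : ℕ, ∀ r : ℕ, R ≤ r → ∀ W : Set (ℤ × ℤ), W ⊆ gridVerts r → W.Finite →
      W.ncard ≤ 3*r^2 → c * Real.sqrt W.ncard ≤ ((hexNbhdIn r W).ncard : ℝ) := by
  exact ⟨1, fun r hr W hW _ hcard =>
    finite_hex_neighbor_isoperimetric_large_radius_general
      (hc.le.trans sqrt_six_sub_sqrt_three_le) hr hW hcard⟩
end

section
/- For every integer r ≥ 1, every vertex of the infinite hexagonal grid G∞ that does not belong to V(G_r) is adjacent to at most one vertex of V(G_r). -/
/-!
Every vertex `v` has three neighbors, one for each direction: the one for direction `i` lies in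
a different direction-`i` row than `v`, while the other two lie in the same direction-`i` row.
Now `V(G_r)` is cut out by three strips of consecutive rows, one strip for each direction, and
a vertex outside `V(G_r)` misses one of the strips, say the one of direction `i`. Its neighbors
in `V(G_r)` therefore change the direction-`i` row, and there is only one such neighbor.
-/

theorem rowInd_zero (v : ℤ × ℤ) : rowInd 0 v = v.2 := rfl

theorem rowInd_one (v : ℤ × ℤ) : rowInd 1 v = (v.2 - v.1) / 2 :=
  Int.fdiv_eq_ediv_of_nonneg _ zero_le_two

theorem rowInd_two (v : ℤ × ℤ) : rowInd 2 v = (v.1 + v.2) / 2 :=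
  Int.fdiv_eq_ediv_of_nonneg _ zero_le_two

/-- The orientation of the vertex `v`: its vertical edge goes up if the value is `1`, and down if
it is `-1`. The two values are the two color classes of the bipartite graph `G∞`. -/
def hexSign (v : ℤ × ℤ) : ℤ :=
  if Even (v.1 + v.2) then 1 else -1

theorem hexSign_cases (v : ℤ × ℤ) :
    hexSign v = 1 ∧ (v.1 + v.2) % 2 = 0 ∨ hexSign v = -1 ∧ (v.1 + v.2) % 2 = 1 := by
  rcases Int.even_or_odd (v.1 + v.2) with h | h
  · exact .inl ⟨if_pos h, Int.even_iff.mp h⟩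
  · exact .inr ⟨if_neg (Int.not_even_iff_odd.mpr h), Int.odd_iff.mp h⟩

/-- The neighbor of `v` along its edge transverse to the rows of direction `i`, that is, the
neighbor that lies in another direction-`i` row than `v`. -/
def transverseNeighbor : Fin 3 → ℤ × ℤ → ℤ × ℤ
  | 0, v => (v.1, v.2 + hexSign v)
  | 1, v => (v.1 + hexSign v, v.2)
  | 2, v => (v.1 - hexSign v, v.2)

theorem hexAdj_iff_exists_transverseNeighbor {v w : ℤ × ℤ} :
    hexAdj v w ↔ ∃ i, transverseNeighbor i v = w := by
  have hsign := hexSign_cases v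
  simp only [hexAdj, Int.even_iff, Fin.exists_fin_succ, Fin.succ_zero_eq_one,
    Fin.succ_one_eq_two, IsEmpty.exists_iff, or_false, transverseNeighbor, Prod.ext_iff]
  omega

theorem rowInd_transverseNeighbor_of_ne {i j : Fin 3} (hij : i ≠ j) (v : ℤ × ℤ) :
    rowInd i (transverseNeighbor j v) = rowInd i v := by
  have hsign := hexSign_cases v
  match i, j, hij with
  | 0, 0, h | 1, 1, h | 2, 2, h => exact absurd rfl h
  | 0, 1, _ | 0, 2, _ => rfl
  | 1, 0, _ | 1, 2, _ =>
    simp only [rowInd_one, transverseNeighbor]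
    omega
  | 2, 0, _ | 2, 1, _ =>
    simp only [rowInd_two, transverseNeighbor]
    omega

theorem hexAdj.eq_transverseNeighbor {v w : ℤ × ℤ} {i : Fin 3} (hvw : hexAdj v w)
    (hi : rowInd i w ≠ rowInd i v) : w = transverseNeighbor i v := by
  obtain ⟨j, rfl⟩ := hexAdj_iff_exists_transverseNeighbor.mp hvw
  obtain rfl : i = j := by_contra fun hij => hi (rowInd_transverseNeighbor_of_ne hij v)
  rfl

/-- The set of vertices whose direction-`i` row has its index in `S i`, for each direction `i`:
an intersection of three unions of parallel rows. -/
def rowInter (S : Fin 3 → Set ℤ) : Set (ℤ × ℤ) :=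
  {v | ∀ i, rowInd i v ∈ S i}

theorem outside_vertex_at_most_one_neighbor_general (S : Fin 3 → Set ℤ) {v w w' : ℤ × ℤ}
    (hv : v ∉ rowInter S) (hw : w ∈ rowInter S) (hw' : w' ∈ rowInter S)
    (h1 : hexAdj v w) (h2 : hexAdj v w') : w = w' := by
  obtain ⟨i, hi⟩ : ∃ i, rowInd i v ∉ S i := not_forall.mp hv
  calc
    w = transverseNeighbor i v := h1.eq_transverseNeighbor (ne_of_mem_of_not_mem (hw i) hi)
    _ = w' := (h2.eq_transverseNeighbor (ne_of_mem_of_not_mem (hw' i) hi)).symm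

theorem mem_hexCell_iff_rowInd {a b : ℤ} {v : ℤ × ℤ} :
    v ∈ hexCell a b ↔ rowInd 0 v ∈ Set.Icc b (b + 1) ∧ rowInd 1 v ∈ Set.Icc (-a - 1) (-a) ∧
      rowInd 2 v ∈ Set.Icc (a + b) (a + b + 1) := by
  simp only [hexCell, Set.mem_insert_iff, Set.mem_singleton_iff, Prod.ext_iff, rowInd_zero,
    rowInd_one, rowInd_two, Set.mem_Icc]
  omega

theorem rowInd_zero_eq_add_or_eq_add_add_one (v : ℤ × ℤ) :
    rowInd 0 v = rowInd 1 v + rowInd 2 v ∨ rowInd 0 v = rowInd 1 v + rowInd 2 v + 1 := by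
  rw [rowInd_zero, rowInd_one, rowInd_two]
  omega

theorem natAbs_add_natAbs_add_natAbs_add_le_two_mul_iff {a b : ℤ} {n : ℕ} :
    a.natAbs + b.natAbs + (a + b).natAbs ≤ 2 * n ↔
      a.natAbs ≤ n ∧ b.natAbs ≤ n ∧ (a + b).natAbs ≤ n := by
  omega

/-- The indices of the `2r` rows of each direction that meet `V(G_r)`. -/
def gridRows (r : ℕ) : Fin 3 → Set ℤ
  | 0 => Set.Icc (1 - r) r
  | 1 => Set.Icc (-r) (r - 1)
  | 2 => Set.Icc (1 - r) r

theorem mem_rowInter_gridRows {r : ℕ} {v : ℤ × ℤ} :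
    v ∈ rowInter (gridRows r) ↔ rowInd 0 v ∈ Set.Icc (1 - r : ℤ) r ∧
      rowInd 1 v ∈ Set.Icc (-r : ℤ) (r - 1) ∧ rowInd 2 v ∈ Set.Icc (1 - r : ℤ) r := by
  simp [rowInter, gridRows, Fin.forall_fin_succ]

theorem gridVerts_subset_rowInter {r : ℕ} (hr : 1 ≤ r) :
    gridVerts r ⊆ rowInter (gridRows r) := by
  rintro v ⟨a, b, hab, hv⟩
  rw [natAbs_add_natAbs_add_natAbs_add_le_two_mul_iff] at hab
  rw [mem_hexCell_iff_rowInd] at hv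
  rw [mem_rowInter_gridRows]
  simp only [Set.mem_Icc] at hv ⊢
  omega

theorem rowInter_subset_gridVerts (r : ℕ) : rowInter (gridRows r) ⊆ gridVerts r := by
  intro v hv
  rw [mem_rowInter_gridRows] at hv
  have hsum := rowInd_zero_eq_add_or_eq_add_add_one v
  simp only [gridVerts, Set.mem_ofPred_eq, mem_hexCell_iff_rowInd,
    natAbs_add_natAbs_add_natAbs_add_le_two_mul_iff]
  generalize rowInd 0 v = p, rowInd 1 v = q, rowInd 2 v = s at hv hsum ⊢
  simp only [Set.mem_Icc] at hv ⊢
  -- Three cells meet at `v`. The last choice in each case is the one that works unless `v` lies in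
  -- an extreme row; the extreme row then tells which of the other two cells to take.
  rcases hsum with hsum | hsum
  · by_cases hp : p = r
    · exact ⟨-q, p - 1, by omega⟩
    by_cases hqs : q = -r ∨ s = r
    · exact ⟨-q - 1, p, by omega⟩
    exact ⟨-q, p, by omega⟩
  · by_cases hp : p = 1 - r
    · exact ⟨-q - 1, p, by omega⟩
    by_cases hqs : q = r - 1 ∨ s = 1 - r
    · exact ⟨-q, p - 1, by omega⟩
    exact ⟨-q - 1, p - 1, by omega⟩

theorem gridVerts_eq_rowInter {r : ℕ} (hr : 1 ≤ r) : gridVerts r = rowInter (gridRows r) :=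
  (gridVerts_subset_rowInter hr).antisymm (rowInter_subset_gridVerts r)

/-- For every `r ≥ 1`, every vertex outside `V(G_r)` is adjacent to at most one vertex
of `V(G_r)`. -/
theorem outside_vertex_at_most_one_neighbor (r : ℕ) (hr : 1 ≤ r) (v : ℤ × ℤ)
    (hv : v ∉ gridVerts r) (w w' : ℤ × ℤ) (hw : w ∈ gridVerts r) (hw' : w' ∈ gridVerts r)
    (h1 : hexAdj v w) (h2 : hexAdj v w') : w = w' := by
  rw [gridVerts_eq_rowInter hr] at hv hw hw'
  exact outside_vertex_at_most_one_neighbor_general (gridRows r) hv hw hw' h1 h2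
end
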